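/- Let α be a terminal-free pattern. Then there exists a Janus automaton M with vd(α) + 1 counters such that L(M) = L(α). -/

import Mathlib

/-! Patterns: variables are natural numbers; a terminal-free pattern is a
nonempty list of variables, with 1-based positions. -/

/-- The variable at (1-based) position `j` of the pattern `α`. -/
def patAt (α : List ℕ) (j : ℕ) : ℕ := α.getD (j - 1) 0

/-- The set of (1-based) positions of the pattern `α` carrying the variable `x`. -/
def varpos (α : List ℕ) (x : ℕ) : Finset ℕ :=
  (Finset.Icc 1 α.length).filter (fun j => patAt α j = x)

/-- A matching order for the variable `x` in the pattern `α`: a sequence of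
`|α|_x − 1` pairs of positions of `x`, each with smaller first component,
whose edge set makes the set of positions of `x` a connected graph. -/
def IsMatchingOrder (α : List ℕ) (x : ℕ) (M : List (ℕ × ℕ)) : Prop :=
  M.length + 1 = α.count x ∧
  (∀ p ∈ M, p.1 ∈ varpos α x ∧ p.2 ∈ varpos α x ∧ p.1 < p.2) ∧
  ∀ a ∈ varpos α x, ∀ b ∈ varpos α x,
    Relation.ReflTransGen (fun u v => (u, v) ∈ M ∨ (v, u) ∈ M) a b

/-- A complete matching order for `α`: a tuple of `Σ_{x ∈ var(α)} (|α|_x − 1)`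
matching positions containing, for every variable `x` of `α`, all the elements
of some matching order for `x` in `α`. -/
def IsCompleteMatchingOrder (α : List ℕ) (C : List (ℕ × ℕ)) : Prop :=
  ∃ M : ℕ → List (ℕ × ℕ),
    (∀ x ∈ α.toFinset, IsMatchingOrder α x (M x)) ∧
    C.length = ∑ x ∈ α.toFinset, (α.count x - 1) ∧
    ∀ x ∈ α.toFinset, ∀ p ∈ M x, p ∈ C
/-! Janus operating modes. -/

/-- The two head markers: `lam` (λ) for the left head, `rho` (ρ) for the right head. -/
inductive Marker : Type
  | lam
  | rho
deriving DecidableEq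

/-- The map `g` from Definition 4: `g(j,j') = (j+1, …, j'−1)` and
`g(j',j) = (j', j'−1, …, j)` for `j < j'`. -/
def gfun (j j' : ℕ) : List ℕ :=
  if j < j' then (List.range (j' - j - 1)).map (fun i => j + 1 + i)
  else if j' < j then (List.range (j - j' + 1)).map (fun i => j - i)
  else []

/-- The position of the most recent entry with marker `m` among the first `j+1`
entries of `L`; if there is none, the first entry of `L` with marker `m`. -/
def latestEntry (L : List (ℕ × Marker)) (j : ℕ) (m : Marker) : Option ℕ :=
  match ((L.take (j + 1)).filter (fun e => decide (e.2 = m))).getLast? with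
  | some e => some e.1
  | none => ((L.filter (fun e => decide (e.2 = m))).head?).map Prod.fst

/-- At every prefix of `L`, the most recent λ-entry is ≤ the most recent ρ-entry
(comparing with the first λ-entry resp. ρ-entry when none has occurred yet). -/
def GoodInterleaving (L : List (ℕ × Marker)) : Prop :=
  ∀ j < L.length, ∀ pl pr,
    latestEntry L j Marker.lam = some pl → latestEntry L j Marker.rho = some pr → pl ≤ pr

/-- `Δ` is a Janus operating mode for `α`, derived from some complete matching
order `C` for `α` (with `(l_0, r_0) := (0, 0)`): each `D_i` is an interleaving
`D'_i` of `g(l_{i−1}, l_i)` with λ-markers and `g(r_{i−1}, r_i)` with ρ-markers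
(preserving the relative order of each, and such that at every prefix the most
recent λ-entry is ≤ the most recent ρ-entry), followed by `(r_i, ρ), (l_i, λ)`. -/
def IsJanusOperatingMode (α : List ℕ) (Δ : List (List (ℕ × Marker))) : Prop :=
  ∃ C : List (ℕ × ℕ),
    IsCompleteMatchingOrder α C ∧
    Δ.length = C.length ∧
    ∀ i < C.length,
      ∃ D' : List (ℕ × Marker),
        D'.filter (fun e => decide (e.2 = Marker.lam)) =
          (gfun (if i = 0 then 0 else (C.getD (i - 1) (0, 0)).1) (C.getD i (0, 0)).1).map
            (fun p => (p, Marker.lam)) ∧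
        D'.filter (fun e => decide (e.2 = Marker.rho)) =
          (gfun (if i = 0 then 0 else (C.getD (i - 1) (0, 0)).2) (C.getD i (0, 0)).2).map
            (fun p => (p, Marker.rho)) ∧
        GoodInterleaving D' ∧
        Δ.getD i [] =
          D' ++ [((C.getD i (0, 0)).2, Marker.rho), ((C.getD i (0, 0)).1, Marker.lam)]

open Classical in
/-- For a string `D` of variables (0-based indexing), `sVal D i` is the number of
variables `x ≠ D_i` having an occurrence both strictly before and strictly after
position `i` in `D`. -/
noncomputable def sVal (D : List ℕ) (i : ℕ) : ℕ :=
  (D.toFinset.filter (fun x =>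
    x ≠ D.getD i 0 ∧ (∃ j, j < i ∧ D.getD j 0 = x) ∧
    ∃ j', i < j' ∧ j' < D.length ∧ D.getD j' 0 = x)).card

/-- The head movement indicator of a Janus operating mode: the concatenation of
its tuples `D_1, …, D_k`. -/
def hmi (Δ : List (List (ℕ × Marker))) : List (ℕ × Marker) := Δ.flatten

/-- The string of variables `D_α = y_{d'_1} · y_{d'_2} · … · y_{d'_{k'}}`
associated with the head movement indicator of `Δ` and the pattern `α`. -/
def hmiVars (α : List ℕ) (Δ : List (List (ℕ × Marker))) : List ℕ :=
  (hmi Δ).map (fun e => patAt α e.1)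

/-- The counter number of a Janus operating mode `Δ` for `α`:
`cn(Δ) = max{s_i | 1 ≤ i ≤ k'}`. -/
noncomputable def cnOf (α : List ℕ) (Δ : List (List (ℕ × Marker))) : ℕ :=
  (Finset.range (hmiVars α Δ).length).sup (sVal (hmiVars α Δ))

/-- The variable distance of `α`: the smallest `k ≥ 0` such that for every
variable `x`, every factorisation `α = β·x·γ·x·δ` with `|γ|_x = 0` satisfies
`|var(γ)| ≤ k`. -/
noncomputable def vd (α : List ℕ) : ℕ :=
  sInf {k : ℕ | ∀ x : ℕ, ∀ β γ δ : List ℕ,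
    α = β ++ [x] ++ γ ++ [x] ++ δ → γ.count x = 0 → γ.toFinset.card ≤ k}
/-- The pattern language of a terminal-free pattern `α` over the terminal
alphabet `A`: all images of `α` under substitutions (morphisms `X* → A*`). -/
def PatternLang (A : Type) (α : List ℕ) : Set (List A) :=
  {w | ∃ σ : ℕ → List A, w = (α.map σ).flatten}

/-- A tape symbol of a Janus automaton: the left endmarker `¢`, the right
endmarker `$`, or an input symbol. -/
inductive JSym (A : Type) : Type
  | lend
  | rend
  | ch (a : A)

/-- A head instruction of a Janus automaton: `−1`, `0` or `1`. -/
inductive HInstr : Type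
  | left
  | stay
  | right

def HInstr.toInt : HInstr → ℤ
  | .left => -1
  | .stay => 0
  | .right => 1

/-- A counter instruction of a Janus automaton: `0` (keep), `1` (increment)
or `r` (reset). -/
inductive CInstr : Type
  | keep
  | inc
  | reset

/-- A Janus automaton with `k` counters over the input alphabet `A`:
a finite state set `Q`, an initial state `q0`, a set `F` of accepting states,
and a transition function
`δ : Q × Σ² × {t_=, t_<}^k → Q × {−1,0,1}² × {0,1,r}^k`
(the counter message `true` stands for `t_=`, i.e. counter value = bound). -/
structure JFA (k : ℕ) (A : Type) : Type 1 where
  Q : Type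
  fin : Fintype Q
  q0 : Q
  F : Set Q
  δ : Q → JSym A → JSym A → (Fin k → Bool) → Q × (HInstr × HInstr) × (Fin k → CInstr)

/-- A configuration of a Janus automaton with `k` counters and state set `Q`:
a state, the two head positions, and the counter values and counter bounds. -/
structure JConfig (k : ℕ) (Q : Type) where
  q : Q
  h1 : ℕ
  h2 : ℕ
  cval : Fin k → ℕ
  cbnd : Fin k → ℕ

/-- The symbol at position `h` of the tape `¢w$` (position `0` is `¢`,
positions `1, …, |w|` carry `w`, position `|w|+1` is `$`). -/
def tapeSym {A : Type} (w : List A) (h : ℕ) : JSym A :=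
  if h = 0 then JSym.lend
  else
    match w[h - 1]? with
    | some a => JSym.ch a
    | none => JSym.rend

/-- A valid configuration on input `¢w$`: `0 ≤ h_1 ≤ h_2 ≤ |w|+1` and
`0 ≤ c_i ≤ C_i ≤ |w|` for every counter `i`. -/
def JValid {k : ℕ} {Q : Type} {A : Type} (w : List A) (c : JConfig k Q) : Prop :=
  c.h1 ≤ c.h2 ∧ c.h2 ≤ w.length + 1 ∧ ∀ i, c.cval i ≤ c.cbnd i ∧ c.cbnd i ≤ w.length

/-- An atomic move of the Janus automaton `M` on input `¢w$`: the transition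
function is applied to the current state, the scanned symbols and the counter
messages; the heads move by the head instructions if
`0 ≤ h_1 + r_1 ≤ h_2 + r_2 ≤ |w|+1` and stay otherwise; a reset counter gets
value `0` and a nondeterministically guessed bound `≤ |w|`, and otherwise the
bound is unchanged and the value is incremented strictly modulo the bound. -/
def JStep {k : ℕ} {A : Type} (M : JFA k A) (w : List A) (c c' : JConfig k M.Q) : Prop :=
  let res := M.δ c.q (tapeSym w c.h1) (tapeSym w c.h2) (fun i => decide (c.cval i = c.cbnd i))
  let t1 : ℤ := (c.h1 : ℤ) + res.2.1.1.toInt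
  let t2 : ℤ := (c.h2 : ℤ) + res.2.1.2.toInt
  JValid w c ∧ JValid w c' ∧
  c'.q = res.1 ∧
  (if 0 ≤ t1 ∧ t1 ≤ t2 ∧ t2 ≤ (w.length : ℤ) + 1
    then (c'.h1 : ℤ) = t1 ∧ (c'.h2 : ℤ) = t2
    else c'.h1 = c.h1 ∧ c'.h2 = c.h2) ∧
  ∀ i : Fin k,
    match res.2.2 i with
    | CInstr.reset => c'.cval i = 0 ∧ c'.cbnd i ≤ w.length
    | CInstr.keep => c'.cbnd i = c.cbnd i ∧ c'.cval i = c.cval i % (c.cbnd i + 1)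
    | CInstr.inc => c'.cbnd i = c.cbnd i ∧ c'.cval i = (c.cval i + 1) % (c.cbnd i + 1)

/-- `M` accepts `w` iff a configuration with an accepting state is reachable
from the initial configuration by a sequence of atomic moves. -/
def JFA.Accepts {k : ℕ} {A : Type} (M : JFA k A) (w : List A) : Prop :=
  ∃ c : JConfig k M.Q,
    Relation.ReflTransGen (JStep M w) ⟨M.q0, 0, 0, fun _ => 0, fun _ => 0⟩ c ∧ c.q ∈ M.F

/-- The language accepted by the Janus automaton `M`. -/
def JFA.Lang {k : ℕ} {A : Type} (M : JFA k A) : Set (List A) := {w | M.Accepts w}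

/-!
The automaton reads `σ(α)` from left to right, one variable of `α` at a time, and keeps the lengths
of images as counter bounds. At the first occurrence of a variable it guesses the length of the
image. At a repeated occurrence of `x` it moves the left head back to the image of the previous
occurrence of `x`, compares that image with the input ahead of the right head, and brings the heads
together again. This only takes the lengths of the images of `x` and of the variables since its
previous occurrence.

After reading `π` in `α = π ++ ρ`, the variables whose lengths are still needed are those occurring
at or after the last occurrence in `π` of some `x` that recurs in `ρ`. These segments are nested, so
only the longest one counts; up to the next occurrence of `x` it contains at most `vd α` variables
other than `x`, so at most `vd α + 1` lengths are needed at any time. A variable read for the first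
time can therefore be given a counter not used by another needed variable, and since a variable
stays needed from its first to its last occurrence, this choice never has to be revised: every
counter belongs to a fixed set of variables, no two of which are needed at the same time.
-/

section Live

variable {V : Type*}

/-- The variables a left-to-right scan of `π ++ ρ` that has just read `π` still has to remember:
those in a suffix `x :: γ` of `π` starting at the last occurrence in `π` of some variable `x`
that recurs in `ρ`. These are the variables whose lengths are needed to move a head
from the end of `π` back to that occurrence of `x`. -/
def liveVars (π ρ : List V) : Set V :=
  {z | ∃ x γ, x :: γ <:+ π ∧ x ∉ γ ∧ x ∈ ρ ∧ z ∈ x :: γ}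

theorem mem_of_mem_liveVars {π ρ : List V} {z : V} (hz : z ∈ liveVars π ρ) : z ∈ π := by
  obtain ⟨x, γ, hsuff, -, -, hmem⟩ := hz
  exact hsuff.subset hmem

theorem exists_eq_append_cons_of_mem_last [DecidableEq V] {π : List V} {x : V} (hx : x ∈ π) :
    ∃ β, π = β ++ x :: π.rtakeWhile (· ≠ x) := by
  induction π using List.reverseRecOn with
  | nil => simp at hx
  | append_singleton π y ih =>
    by_cases hyx : y = x
    · exact ⟨π, by simp [hyx]⟩
    · obtain ⟨β, hβ⟩ := ih (by simpa [Ne.symm hyx] using hx)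
      exact ⟨β, by
        rw [List.rtakeWhile_concat_pos _ _ _ (by simpa using hyx), ← List.cons_append,
          ← List.append_assoc, ← hβ]⟩

theorem mem_liveVars_of_mem {π ρ : List V} {x : V} (hπ : x ∈ π) (hρ : x ∈ ρ) :
    x ∈ liveVars π ρ := by
  classical
  obtain ⟨β, hβ⟩ := exists_eq_append_cons_of_mem_last hπ
  exact ⟨x, _, ⟨β, hβ.symm⟩, fun h => by simpa using List.mem_rtakeWhile_imp h, hρ,
    List.mem_cons_self⟩

theorem mem_liveVars_of_mem_liveVars_concat {π ρ : List V} {y z : V}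
    (hz : z ∈ liveVars (π ++ [y]) ρ) (hzπ : z ∈ π) : z ∈ liveVars π (y :: ρ) := by
  obtain ⟨x, γ, hsuff, hxγ, hxρ, hmem⟩ := hz
  rcases eq_or_ne z y with rfl | hzy
  · exact mem_liveVars_of_mem hzπ List.mem_cons_self
  obtain h | ⟨τ, hτ, hτπ⟩ := List.suffix_concat_iff.1 hsuff
  · simp at h
  rcases τ with - | ⟨x', γ'⟩
  · simp_all
  · obtain ⟨rfl, rfl⟩ : x = x' ∧ γ = γ' ++ [y] := by simpa using hτ
    refine ⟨x, γ', hτπ, fun h => hxγ (List.mem_append_left _ h), List.mem_cons_of_mem _ hxρ, ?_⟩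
    simpa [hzy] using hmem

theorem liveVars_concat_subset_insert (π ρ : List V) (y : V) :
    liveVars (π ++ [y]) ρ ⊆ insert y (liveVars π (y :: ρ)) := by
  intro z hz
  rcases List.mem_append.1 (mem_of_mem_liveVars hz) with hzπ | hzy
  · exact Or.inr (mem_liveVars_of_mem_liveVars_concat hz hzπ)
  · exact Or.inl (List.mem_singleton.1 hzy)

theorem liveVars_concat_subset {π : List V} (ρ : List V) {y : V} (hy : y ∈ π) :
    liveVars (π ++ [y]) ρ ⊆ liveVars π (y :: ρ) :=
  (liveVars_concat_subset_insert π ρ y).trans <|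
    Set.insert_subset (mem_liveVars_of_mem hy List.mem_cons_self) subset_rfl

theorem concat_mem_liveVars {π ρ : List V} {y z : V} (hz : z ∈ liveVars (π ++ [y]) ρ) :
    y ∈ liveVars (π ++ [y]) ρ := by
  obtain ⟨x, γ, hsuff, hxγ, hxρ, -⟩ := hz
  refine ⟨x, γ, hsuff, hxγ, hxρ, ?_⟩
  obtain h | ⟨τ, hτ, -⟩ := List.suffix_concat_iff.1 hsuff
  · simp at h
  · simp [hτ]

theorem liveVars_cons_of_mem {a : V} {π ρ : List V} (h : a ∈ ρ → a ∈ π) :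
    liveVars (a :: π) ρ = liveVars π ρ := by
  ext z
  refine ⟨fun ⟨x, γ, hsuff, hxγ, hxρ, hz⟩ => ?_, fun ⟨x, γ, hsuff, hrest⟩ =>
    ⟨x, γ, hsuff.trans (List.suffix_cons a π), hrest⟩⟩
  rcases List.suffix_cons_iff.1 hsuff with heq | hsuff
  · obtain ⟨rfl, rfl⟩ := List.cons.inj heq
    exact absurd (h hxρ) hxγ
  · exact ⟨x, γ, hsuff, hxγ, hxρ, hz⟩

theorem exists_liveVars_subset {π ρ : List V} (hne : (liveVars π ρ).Nonempty) :
    ∃ x γ, x :: γ <:+ π ∧ x ∉ γ ∧ x ∈ ρ ∧ liveVars π ρ ⊆ {z | z ∈ x :: γ} := by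
  induction π with
  | nil =>
    obtain ⟨z, hz⟩ := hne
    simpa using mem_of_mem_liveVars hz
  | cons a π ih =>
    by_cases h : a ∈ ρ → a ∈ π
    · rw [liveVars_cons_of_mem h] at hne ⊢
      obtain ⟨x, γ, hsuff, hrest⟩ := ih hne
      exact ⟨x, γ, hsuff.trans (List.suffix_cons a π), hrest⟩
    · push Not at h
      exact ⟨a, π, List.suffix_refl _, h.2, h.1, fun _ => mem_of_mem_liveVars⟩

end Live

theorem card_toFinset_le_vd {x : ℕ} {β γ δ : List ℕ} (hx : x ∉ γ) :
    γ.toFinset.card ≤ vd (β ++ [x] ++ γ ++ [x] ++ δ) := by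
  set α := β ++ [x] ++ γ ++ [x] ++ δ with hα
  have hbounded : {k | ∀ x : ℕ, ∀ β γ δ : List ℕ,
      α = β ++ [x] ++ γ ++ [x] ++ δ → γ.count x = 0 → γ.toFinset.card ≤ k}.Nonempty := by
    refine ⟨α.length, fun x β γ δ h _ => (List.toFinset_card_le γ).trans ?_⟩
    simp only [h, List.length_append]
    omega
  exact Nat.sInf_mem hbounded x β γ δ hα (List.count_eq_zero.2 hx)

theorem ncard_liveVars_le (π ρ : List ℕ) : (liveVars π ρ).ncard ≤ vd (π ++ ρ) + 1 := by
  rcases (liveVars π ρ).eq_empty_or_nonempty with hempty | hne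
  · simp [hempty]
  obtain ⟨x, γ, ⟨β, rfl⟩, hxγ, hxρ, hsub⟩ := exists_liveVars_subset hne
  obtain ⟨γ', δ, rfl, hxγ'⟩ := List.eq_append_cons_of_mem hxρ
  calc (liveVars (β ++ x :: γ) (γ' ++ x :: δ)).ncard
      ≤ ((insert x (γ ++ γ').toFinset : Finset ℕ) : Set ℕ).ncard :=
        Set.ncard_le_ncard (hsub.trans fun z hz => by simp at hz ⊢; tauto)
          (Finset.finite_toSet _)
    _ ≤ (γ ++ γ').toFinset.card + 1 := by
        rw [Set.ncard_coe_finset]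
        exact Finset.card_insert_le _ _
    _ ≤ vd (β ++ x :: γ ++ (γ' ++ x :: δ)) + 1 := by
        have h := card_toFinset_le_vd (β := β) (γ := γ ++ γ') (δ := δ) (x := x) (by simp [*])
        simpa using h

section Coloring

variable {V : Type*} {k : ℕ}

theorem exists_injOn_update [DecidableEq V] {S : Set V} (hfin : S.Finite) (hcard : S.ncard ≤ k + 1)
    {col : V → Fin (k + 1)} {y : V} (hinj : Set.InjOn col (S \ {y})) :
    ∃ c, Set.InjOn (Function.update col y c) S := by
  by_cases hy : y ∈ S
  · have hlt : (col '' (S \ {y})).ncard < (Set.univ : Set (Fin (k + 1))).ncard := by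
      rw [Set.ncard_univ, Nat.card_fin]
      have := Set.ncard_image_le (f := col) hfin.sdiff (s := S \ {y})
      have := Set.ncard_sdiff_singleton_lt_of_mem hy hfin
      omega
    obtain ⟨c, -, hc⟩ := Set.exists_mem_notMem_of_ncard_lt_ncard hlt
    have heq : Set.EqOn (Function.update col y c) col (S \ {y}) := fun z hz =>
      Function.update_of_ne hz.2 c col
    refine ⟨c, ?_⟩
    rw [← Set.insert_sdiff_self_of_mem hy, Set.injOn_insert (by simp), heq.injOn_iff,
      heq.image_eq, Function.update_self]
    exact ⟨hinj, hc⟩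
  · exact ⟨col y, by rwa [Function.update_eq_self, ← Set.sdiff_singleton_eq_self hy]⟩

theorem exists_injOn_liveVars {α : List V}
    (hcard : ∀ π ρ, π ++ ρ = α → (liveVars π ρ).ncard ≤ k + 1) :
    ∃ col : V → Fin (k + 1), ∀ π ρ, π ++ ρ = α → Set.InjOn col (liveVars π ρ) := by
  classical
  suffices ∀ π ρ, π ++ ρ = α → ∃ col : V → Fin (k + 1),
      ∀ π' ρ', π' ++ ρ' = α → π' <+: π → Set.InjOn col (liveVars π' ρ') by
    obtain ⟨col, hcol⟩ := this α [] (List.append_nil α)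
    exact ⟨col, fun π ρ h => hcol π ρ h ⟨ρ, h⟩⟩
  intro π
  induction π using List.reverseRecOn with
  | nil =>
    refine fun _ _ => ⟨fun _ => 0, fun π' ρ' _ hpre z hz => ?_⟩
    cases List.prefix_nil.1 hpre ▸ mem_of_mem_liveVars hz
  | append_singleton π y ih =>
    intro ρ hα
    have hsplit : π ++ y :: ρ = α := by simpa using hα
    obtain ⟨col, hcol⟩ := ih (y :: ρ) hsplit
    have hlive := hcol π (y :: ρ) hsplit (List.prefix_refl π)
    suffices ∃ col' : V → Fin (k + 1), Set.EqOn col' col {z | z ∈ π} ∧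
        Set.InjOn col' (liveVars (π ++ [y]) ρ) by
      obtain ⟨col', heq, hinj⟩ := this
      refine ⟨col', fun π' ρ' hα' hpre => ?_⟩
      rcases List.prefix_concat_iff.1 hpre with rfl | hpre
      · rwa [List.append_cancel_left (hα'.trans hα.symm)]
      · refine (heq.mono fun z hz => ?_).injOn_iff.2 (hcol π' ρ' hα' hpre)
        exact hpre.subset (mem_of_mem_liveVars hz)
    by_cases hy : y ∈ π
    · exact ⟨col, Set.eqOn_refl _ _, hlive.mono (liveVars_concat_subset ρ hy)⟩
    · have hfin : (liveVars (π ++ [y]) ρ).Finite :=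
        (List.finite_toSet (π ++ [y])).subset fun _ => mem_of_mem_liveVars
      obtain ⟨c, hc⟩ := exists_injOn_update hfin (hcard _ _ hα) (hlive.mono
        (Set.sdiff_singleton_subset_iff.2 (liveVars_concat_subset_insert π ρ y)))
      exact ⟨_, fun z hz => Function.update_of_ne (ne_of_mem_of_not_mem hz hy) _ _, hc⟩

end Coloring

section Heads

/-- The positions are legal for the two heads on an input of length `n`. -/
def HeadsValid (n : ℕ) (h : ℕ × ℕ) : Prop := h.1 ≤ h.2 ∧ h.2 ≤ n + 1

/-- The effect of a pair of head instructions on the head positions on an input of length `n`: an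
instruction leading to illegal positions is ignored. -/
def moveHeads (n : ℕ) (r : HInstr × HInstr) (h : ℕ × ℕ) : ℕ × ℕ :=
  if 0 ≤ h.1 + r.1.toInt ∧ h.1 + r.1.toInt ≤ h.2 + r.2.toInt ∧ h.2 + r.2.toInt ≤ n + 1 then
    ((h.1 + r.1.toInt).toNat, (h.2 + r.2.toInt).toNat)
  else h

theorem HeadsValid.moveHeads {n : ℕ} {h : ℕ × ℕ} (hh : HeadsValid n h) (r : HInstr × HInstr) :
    HeadsValid n (moveHeads n r h) := by
  unfold HeadsValid _root_.moveHeads at *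
  grind

theorem HeadsValid.iterate_moveHeads {n : ℕ} {h : ℕ × ℕ} (hh : HeadsValid n h)
    (r : HInstr × HInstr) (t : ℕ) : HeadsValid n ((_root_.moveHeads n r)^[t] h) :=
  Function.Iterate.rec (HeadsValid n) hh (fun _ h => h.moveHeads r) t

theorem moveHeads_stay (n : ℕ) (h : ℕ × ℕ) : moveHeads n (.stay, .stay) h = h := by
  simp [moveHeads, HInstr.toInt]

theorem iterate_moveHeads_eq {n t : ℕ} {r : HInstr × HInstr} {h h' : ℕ × ℕ}
    (hh : HeadsValid n h) (hh' : HeadsValid n h') (h₁ : (h'.1 : ℤ) = h.1 + t * r.1.toInt)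
    (h₂ : (h'.2 : ℤ) = h.2 + t * r.2.toInt) : (moveHeads n r)^[t] h = h' := by
  induction t generalizing h with
  | zero => simp_all [Prod.ext_iff]
  | succ t ih =>
    rw [Function.iterate_succ_apply]
    have hmoved : ((moveHeads n r h).1 : ℤ) = h.1 + r.1.toInt ∧
        ((moveHeads n r h).2 : ℤ) = h.2 + r.2.toInt := by
      obtain ⟨⟨⟩, ⟨⟩⟩ := r <;> simp only [HInstr.toInt, HeadsValid, moveHeads] at * <;> grind
    refine ih (hh.moveHeads r) ?_ ?_
    · rw [hmoved.1, h₁]; push_cast; ring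
    · rw [hmoved.2, h₂]; push_cast; ring

theorem moveHeads_eq_iff {n : ℕ} {r : HInstr × HInstr} {h h' : ℕ × ℕ} :
    moveHeads n r h = h' ↔
      if 0 ≤ (h.1 : ℤ) + r.1.toInt ∧ (h.1 : ℤ) + r.1.toInt ≤ h.2 + r.2.toInt ∧
        (h.2 : ℤ) + r.2.toInt ≤ n + 1
      then (h'.1 : ℤ) = h.1 + r.1.toInt ∧ (h'.2 : ℤ) = h.2 + r.2.toInt
      else h'.1 = h.1 ∧ h'.2 = h.2 := by
  unfold moveHeads
  split_ifs <;> simp only [Prod.ext_iff] <;> omega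

end Heads

section Counters

variable {k : ℕ}

/-- Counter values and bounds `v, b` become `v', b'` by an atomic move with counter
instructions `m` on an input of length `n`. -/
def CounterStep (n : ℕ) (m : Fin k → CInstr) (v b v' b' : Fin k → ℕ) : Prop :=
  ∀ i, match m i with
    | .reset => v' i = 0 ∧ b' i ≤ n
    | .keep => b' i = b i ∧ v' i = v i % (b i + 1)
    | .inc => b' i = b i ∧ v' i = (v i + 1) % (b i + 1)

variable {n : ℕ} {v b v' b' : Fin k → ℕ} {i : Fin k}

theorem value_mod_bound (hv : v ≤ b) (j : Fin k) : v j % (b j + 1) = v j :=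
  Nat.mod_eq_of_lt (Nat.lt_succ_of_le (hv j))

theorem counterStep_keep_iff (hv : v ≤ b) :
    CounterStep n (fun _ => .keep) v b v' b' ↔ v' = v ∧ b' = b := by
  simp only [CounterStep, value_mod_bound hv, forall_and, funext_iff]
  exact and_comm

theorem counterStep_inc_iff (hv : v ≤ b) :
    CounterStep n (Function.update (fun _ => .keep) i .inc) v b v' b' ↔
      v' = Function.update v i ((v i + 1) % (b i + 1)) ∧ b' = b := by
  simp only [CounterStep, funext_iff, ← forall_and]
  refine forall_congr' fun j => ?_
  rcases eq_or_ne j i with rfl | hj <;> simp [*, value_mod_bound hv, and_comm]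

theorem counterStep_reset_iff (hv : v ≤ b) :
    CounterStep n (Function.update (fun _ => .keep) i .reset) v b v' b' ↔
      v' = Function.update v i 0 ∧ ∃ c ≤ n, b' = Function.update b i c := by
  simp only [CounterStep, Function.eq_update_iff]
  constructor
  · intro h
    have hi := h i
    have hne (j) (_ : j ≠ i) := h j
    simp_all [value_mod_bound hv]
  · rintro ⟨⟨hi, hne⟩, c, hc, rfl, hne'⟩ j
    rcases eq_or_ne j i with rfl | hj <;> simp_all [value_mod_bound hv]

theorem CounterStep.valid {m : Fin k → CInstr} (hb : ∀ i, b i ≤ n)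
    (h : CounterStep n m v b v' b') : v' ≤ b' ∧ ∀ i, b' i ≤ n := by
  rw [Pi.le_def, ← forall_and]
  intro i
  have hmod (x) : x % (b i + 1) ≤ b i := Nat.lt_succ_iff.1 (Nat.mod_lt x (b i).succ_pos)
  have hi := h i
  split at hi
  · exact ⟨hi.1 ▸ Nat.zero_le _, hi.2⟩
  all_goals
    rw [hi.1, hi.2]
    exact ⟨hmod _, hb i⟩

end Counters

section Store

variable {k : ℕ} {A Q : Type}

/-- The part of a configuration visible between two instructions of a program: the head
positions and the counter bounds. -/
structure JStore (k : ℕ) where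
  heads : ℕ × ℕ
  bound : Fin k → ℕ

/-- The configuration with state `q` and counter values `v` over a given store. -/
def JStore.config (s : JStore k) (q : Q) (v : Fin k → ℕ) : JConfig k Q :=
  ⟨q, s.heads.1, s.heads.2, v, s.bound⟩

/-- The store respects the limits on head positions and counter bounds for an input of
length `n`. -/
def JStore.Valid (n : ℕ) (s : JStore k) : Prop := HeadsValid n s.heads ∧ ∀ i, s.bound i ≤ n

theorem jvalid_config_iff {w : List A} {s : JStore k} {q : Q} {v : Fin k → ℕ} :
    JValid w (s.config q v) ↔ s.Valid w.length ∧ v ≤ s.bound := by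
  simp only [JValid, JStore.config, JStore.Valid, HeadsValid, forall_and, Pi.le_def]
  tauto

/-- The store after executing the head instructions `r` on an input of length `n`. -/
def JStore.move (n : ℕ) (r : HInstr × HInstr) (s : JStore k) : JStore k :=
  { s with heads := moveHeads n r s.heads }

/-- The store after the bound of counter `i` has been replaced by `b`. -/
def JStore.setBound (i : Fin k) (b : ℕ) (s : JStore k) : JStore k :=
  { s with bound := Function.update s.bound i b }

/-- The store with both heads put on position `p`. -/
def JStore.placeHeads (p : ℕ) (s : JStore k) : JStore k :=
  { s with heads := (p, p) }

theorem JStore.iterate_move (n : ℕ) (r : HInstr × HInstr) (t : ℕ) (s : JStore k) :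
    (JStore.move n r)^[t] s = { s with heads := (moveHeads n r)^[t] s.heads } := by
  induction t with
  | zero => rfl
  | succ t ih => rw [Function.iterate_succ_apply', ih, Function.iterate_succ_apply']; rfl

theorem JStore.bound_iterate_move (n t : ℕ) (r : HInstr × HInstr) (s : JStore k) :
    ((JStore.move n r)^[t] s).bound = s.bound := by
  rw [iterate_move]

end Store

section Step

variable {k : ℕ} {A : Type} {M : JFA k A} {w : List A} {s : JStore k} {q q' : M.Q}
  {v : Fin k → ℕ} {r : HInstr × HInstr} {i : Fin k} {c' : JConfig k M.Q}

theorem jstep_config_iff {m : Fin k → CInstr} (hc : JValid w (s.config q v))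
    (hδ : M.δ q (tapeSym w s.heads.1) (tapeSym w s.heads.2)
      (fun i => decide (v i = s.bound i)) = (q', r, m)) :
    JStep M w (s.config q v) c' ↔ ∃ s' v', c' = JStore.config s' q' v' ∧
      s'.heads = moveHeads w.length r s.heads ∧
      CounterStep w.length m v s.bound v' s'.bound := by
  have hs := (jvalid_config_iff.1 hc).1
  have hδ' : M.δ (s.config q v).q (tapeSym w (s.config q v).h1) (tapeSym w (s.config q v).h2)
      (fun i => decide ((s.config q v).cval i = (s.config q v).cbnd i)) = (q', r, m) := hδ
  simp only [JStep, hδ', eq_comm (b := moveHeads _ _ _), moveHeads_eq_iff]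
  constructor
  · rintro ⟨-, -, hq, hheads, hcount⟩
    exact ⟨⟨(c'.h1, c'.h2), c'.cbnd⟩, c'.cval, by cases hq; rfl, hheads, hcount⟩
  · rintro ⟨s', v', rfl, hheads, hcount⟩
    refine ⟨hc, jvalid_config_iff.2 ⟨⟨?_, ?_⟩, ?_⟩, rfl, hheads, hcount⟩
    · rw [← moveHeads_eq_iff.2 hheads]
      exact hs.1.moveHeads r
    · exact (CounterStep.valid hs.2 hcount).2
    · exact (CounterStep.valid hs.2 hcount).1

theorem jstep_keep_iff (hc : JValid w (s.config q v))
    (hδ : M.δ q (tapeSym w s.heads.1) (tapeSym w s.heads.2)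
      (fun i => decide (v i = s.bound i)) = (q', r, fun _ => .keep)) :
    JStep M w (s.config q v) c' ↔ c' = (s.move w.length r).config q' v := by
  simp only [jstep_config_iff hc hδ, counterStep_keep_iff (jvalid_config_iff.1 hc).2]
  constructor
  · rintro ⟨⟨h, b⟩, v', rfl, rfl, rfl, rfl⟩; rfl
  · rintro rfl; exact ⟨_, _, rfl, rfl, rfl, rfl⟩

theorem jstep_inc_iff (hc : JValid w (s.config q v))
    (hδ : M.δ q (tapeSym w s.heads.1) (tapeSym w s.heads.2)
      (fun i => decide (v i = s.bound i)) = (q', r, Function.update (fun _ => .keep) i .inc)) :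
    JStep M w (s.config q v) c' ↔ c' = (s.move w.length r).config q'
      (Function.update v i ((v i + 1) % (s.bound i + 1))) := by
  simp only [jstep_config_iff hc hδ, counterStep_inc_iff (jvalid_config_iff.1 hc).2]
  constructor
  · rintro ⟨⟨h, b⟩, v', rfl, rfl, rfl, rfl⟩; rfl
  · rintro rfl; exact ⟨_, _, rfl, rfl, rfl, rfl⟩

theorem jstep_reset_iff (hc : JValid w (s.config q v))
    (hδ : M.δ q (tapeSym w s.heads.1) (tapeSym w s.heads.2)
      (fun i => decide (v i = s.bound i)) = (q', r, Function.update (fun _ => .keep) i .reset)) :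
    JStep M w (s.config q v) c' ↔ ∃ b ≤ w.length, c' =
      ((s.move w.length r).setBound i b).config q' (Function.update v i 0) := by
  simp only [jstep_config_iff hc hδ, counterStep_reset_iff (jvalid_config_iff.1 hc).2]
  constructor
  · rintro ⟨⟨h, b⟩, v', rfl, rfl, rfl, c, hc, rfl⟩; exact ⟨c, hc, rfl⟩
  · rintro ⟨c, hc, rfl⟩; exact ⟨_, _, rfl, rfl, rfl, c, hc, rfl⟩

end Step

section Instructions

variable {k : ℕ} {A : Type} {w : List A}

/-- The two heads scan symbols satisfying the guard `g`. -/
abbrev Scans (w : List A) (g : JSym A → JSym A → Prop) (s : JStore k) : Prop :=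
  g (tapeSym w s.heads.1) (tapeSym w s.heads.2)

/-- Instructions of straight-line programs for a two-head machine whose registers are the counter
bounds: perform the head instructions `r` once, or as often as the bound of counter `i` says,
provided that the guard `g` holds before each move; or replace the bound of counter `i` by
a guessed number. -/
inductive JInstr (k : ℕ) (A : Type)
  | once (g : JSym A → JSym A → Prop) (r : HInstr × HInstr)
  | loop (i : Fin k) (g : JSym A → JSym A → Prop) (r : HInstr × HInstr)
  | guess (i : Fin k)

/-- The effect of an instruction on stores. -/
def JInstr.Exec (w : List A) : JInstr k A → JStore k → JStore k → Prop
  | .once g r, s, s' => Scans w g s ∧ s' = s.move w.length r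
  | .loop i g r, s, s' =>
    (∀ t < s.bound i, Scans w g ((JStore.move w.length r)^[t] s)) ∧
      s' = (JStore.move w.length r)^[s.bound i] s
  | .guess i, s, s' => ∃ b ≤ w.length, s' = s.setBound i b

/-- The stores `s` and counter values `v` reachable from `s₀` while an instruction is being
executed. -/
def JInstr.InProgress (w : List A) : JInstr k A → JStore k → JStore k → (Fin k → ℕ) → Prop
  | .loop i g r, s₀, s, v =>
    ∃ t ≤ s₀.bound i, (∀ t' < t, Scans w g ((JStore.move w.length r)^[t'] s₀)) ∧
      s = (JStore.move w.length r)^[t] s₀ ∧ v = Pi.single i t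
  | _, s₀, s, v => s = s₀ ∧ v = 0

open Classical in
/-- The transition function of a state `q` that executes an instruction and then proceeds to `q'`.
It stays in `q` forever if a guard fails. In a loop the value of the counter is the number of moves
made so far; the increment at the end of the loop wraps it around to `0`. -/
noncomputable def JInstr.transition {Q : Type} (q q' : Q) :
    JInstr k A → JSym A → JSym A → (Fin k → Bool) → Q × (HInstr × HInstr) × (Fin k → CInstr)
  | .once g r, a, b, _ =>
    if g a b then (q', r, fun _ => .keep) else (q, (.stay, .stay), fun _ => .keep)
  | .loop i g r, a, b, full =>
    if full i then (q', (.stay, .stay), Function.update (fun _ => .keep) i .inc)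
    else if g a b then (q, r, Function.update (fun _ => .keep) i .inc)
    else (q, (.stay, .stay), fun _ => .keep)
  | .guess i, _, _, _ => (q', (.stay, .stay), Function.update (fun _ => .keep) i .reset)

theorem JStore.move_stay (n : ℕ) (s : JStore k) : s.move n (.stay, .stay) = s := by
  rw [JStore.move, moveHeads_stay]

theorem JStore.Valid.iterate_move {n : ℕ} {s : JStore k} (hs : s.Valid n) (r : HInstr × HInstr)
    (t : ℕ) : ((JStore.move n r)^[t] s).Valid n := by
  rw [JStore.iterate_move]
  exact ⟨hs.1.iterate_moveHeads r t, hs.2⟩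

theorem JStore.Valid.setBound {n b : ℕ} {s : JStore k} (hs : s.Valid n) (i : Fin k) (hb : b ≤ n) :
    (s.setBound i b).Valid n :=
  ⟨hs.1, (Function.forall_update_iff s.bound fun _ x => x ≤ n).2 ⟨hb, fun j _ => hs.2 j⟩⟩

theorem JInstr.Exec.valid {ι : JInstr k A} {s s' : JStore k} (h : ι.Exec w s s')
    (hs : s.Valid w.length) : s'.Valid w.length := by
  rcases ι with ⟨g, r⟩ | ⟨i, g, r⟩ | i
  · exact h.2 ▸ hs.iterate_move r 1
  · exact h.2 ▸ hs.iterate_move r _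
  · obtain ⟨b, hb, rfl⟩ := h
    exact hs.setBound i hb

theorem JInstr.inProgress_refl (w : List A) (ι : JInstr k A) (s : JStore k) :
    ι.InProgress w s s 0 := by
  rcases ι with _ | ⟨i, g, r⟩ | _
  · exact ⟨rfl, rfl⟩
  · exact ⟨0, Nat.zero_le _, by simp, rfl, by simp⟩
  · exact ⟨rfl, rfl⟩

end Instructions

section Simulation

variable {k : ℕ} {A : Type} {M : JFA k A} {w : List A} {q q' : M.Q} {s : JStore k}

theorem jvalid_loop {t : ℕ} {i : Fin k} (hs : s.Valid w.length) (r : HInstr × HInstr)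
    (ht : t ≤ s.bound i) :
    JValid w (((JStore.move w.length r)^[t] s).config q (Pi.single i t)) := by
  refine jvalid_config_iff.2 ⟨hs.iterate_move r t, ?_⟩
  rw [JStore.bound_iterate_move]
  exact update_le_iff.2 ⟨ht, fun _ _ => Nat.zero_le _⟩

theorem jstep_loop_iff {t : ℕ} {i : Fin k} {g : JSym A → JSym A → Prop} {r : HInstr × HInstr}
    (hδ : M.δ q = (JInstr.loop i g r).transition q q') (hs : s.Valid w.length)
    (ht : t < s.bound i) (hg : Scans w g ((JStore.move w.length r)^[t] s)) {c' : JConfig k M.Q} :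
    JStep M w (((JStore.move w.length r)^[t] s).config q (Pi.single i t)) c' ↔
      c' = ((JStore.move w.length r)^[t + 1] s).config q (Pi.single i (t + 1)) := by
  rw [jstep_inc_iff (q' := q) (r := r) (i := i) (jvalid_loop hs r ht.le)]
  · simp [JStore.bound_iterate_move, Function.iterate_succ_apply', Nat.mod_eq_of_lt, ht, Pi.single]
  · simp [hδ, JInstr.transition, JStore.bound_iterate_move, ht.ne, hg]

theorem jstep_loop_exit_iff {i : Fin k} {g : JSym A → JSym A → Prop} {r : HInstr × HInstr}
    (hδ : M.δ q = (JInstr.loop i g r).transition q q') (hs : s.Valid w.length)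
    {c' : JConfig k M.Q} :
    JStep M w (((JStore.move w.length r)^[s.bound i] s).config q (Pi.single i (s.bound i))) c' ↔
      c' = ((JStore.move w.length r)^[s.bound i] s).config q' 0 := by
  rw [jstep_inc_iff (q' := q') (r := (.stay, .stay)) (i := i) (jvalid_loop hs r le_rfl)]
  · simp [JStore.bound_iterate_move, JStore.move_stay, Pi.single]
  · simp [hδ, JInstr.transition, JStore.bound_iterate_move]

theorem JInstr.Exec.reachable {ι : JInstr k A} {s' : JStore k} (h : ι.Exec w s s')
    (hδ : M.δ q = ι.transition q q') (hs : s.Valid w.length) :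
    Relation.ReflTransGen (JStep M w) (s.config q 0) (s'.config q' 0) := by
  have hvalid : JValid w (s.config q 0) := jvalid_config_iff.2 ⟨hs, fun _ => Nat.zero_le _⟩
  rcases ι with ⟨g, r⟩ | ⟨i, g, r⟩ | i
  · obtain ⟨hg, rfl⟩ := h
    refine .single ((jstep_keep_iff hvalid ?_).2 rfl)
    rw [hδ, JInstr.transition, if_pos hg]
  · obtain ⟨hg, rfl⟩ := h
    have hloop (t) (ht : t ≤ s.bound i) : Relation.ReflTransGen (JStep M w) (s.config q 0)
        (((JStore.move w.length r)^[t] s).config q (Pi.single i t)) := by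
      induction t with
      | zero => rw [Pi.single_zero]; rfl
      | succ t ih => exact (ih (by omega)).tail ((jstep_loop_iff hδ hs ht (hg t ht)).2 rfl)
    exact (hloop _ le_rfl).tail ((jstep_loop_exit_iff hδ hs).2 rfl)
  · obtain ⟨b, hb, rfl⟩ := h
    refine .single ((jstep_reset_iff hvalid (by rw [hδ, JInstr.transition])).2 ⟨b, hb, ?_⟩)
    simp [JStore.move_stay]

theorem JInstr.InProgress.step {ι : JInstr k A} {s₀ : JStore k} {v : Fin k → ℕ}
    {c' : JConfig k M.Q} (h : ι.InProgress w s₀ s v)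
    (hδ : M.δ q = ι.transition q q') (hs₀ : s₀.Valid w.length)
    (hstep : JStep M w (s.config q v) c') :
    (∃ s' v', c' = JStore.config s' q v' ∧ ι.InProgress w s₀ s' v') ∨
      ∃ s', c' = JStore.config s' q' 0 ∧ ι.Exec w s₀ s' := by
  have hvalid := hstep.1
  rcases ι with ⟨g, r⟩ | ⟨i, g, r⟩ | i
  · obtain ⟨rfl, rfl⟩ := h
    by_cases hg : Scans w g s
    · rw [jstep_keep_iff hvalid (by rw [hδ, JInstr.transition, if_pos hg])] at hstep
      exact .inr ⟨_, hstep, hg, rfl⟩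
    · rw [jstep_keep_iff hvalid (by rw [hδ, JInstr.transition, if_neg hg])] at hstep
      exact .inl ⟨_, _, hstep, JStore.move_stay _ s, rfl⟩
  · obtain ⟨t, ht, hscan, rfl, rfl⟩ := h
    rcases ht.eq_or_lt with rfl | ht
    · exact .inr ⟨_, (jstep_loop_exit_iff hδ hs₀).1 hstep, hscan, rfl⟩
    by_cases hg : Scans w g ((JStore.move w.length r)^[t] s₀)
    · exact .inl ⟨_, _, (jstep_loop_iff hδ hs₀ ht hg).1 hstep, t + 1, ht,
        Nat.forall_lt_succ_right.2 ⟨hscan, hg⟩, rfl, rfl⟩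
    · rw [jstep_keep_iff hvalid (q' := q) (r := (.stay, .stay))] at hstep
      · exact .inl ⟨_, _, hstep, t, ht.le, hscan, JStore.move_stay _ _, rfl⟩
      · simp [hδ, JInstr.transition, JStore.bound_iterate_move, ht.ne, hg]
  · obtain ⟨rfl, rfl⟩ := h
    obtain ⟨b, hb, rfl⟩ := (jstep_reset_iff hvalid (by rw [hδ, JInstr.transition])).1 hstep
    exact .inr ⟨s.setBound i b, by simp [JStore.move_stay], b, hb, rfl⟩

end Simulation

section Programs

variable {k : ℕ} {A : Type} {w : List A} {P P' : List (JInstr k A)} {s s' : JStore k}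

/-- Executing the straight-line program `P` on input `w` can turn the store `s` into `s'`. -/
def JRun (w : List A) : List (JInstr k A) → JStore k → JStore k → Prop
  | [], s, s' => s = s'
  | ι :: P, s, s' => ∃ t, ι.Exec w s t ∧ JRun w P t s'

theorem jrun_append : JRun w (P ++ P') s s' ↔ ∃ t, JRun w P s t ∧ JRun w P' t s' := by
  induction P generalizing s with
  | nil => simp [JRun]
  | cons ι P ih => simp only [List.cons_append, JRun, ih]; grind

theorem jrun_singleton {ι : JInstr k A} : JRun w [ι] s s' ↔ ι.Exec w s s' := by
  simp [JRun]

theorem JRun.valid (h : JRun w P s s') (hs : s.Valid w.length) : s'.Valid w.length := by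
  induction P generalizing s with
  | nil => exact h ▸ hs
  | cons ι P ih =>
    obtain ⟨t, hι, hP⟩ := h
    exact ih hP (hι.valid hs)

theorem jrun_take_succ {q : ℕ} {ι : JInstr k A} (hι : P[q]? = some ι) :
    JRun w (P.take (q + 1)) s s' ↔ ∃ t, JRun w (P.take q) s t ∧ ι.Exec w t s' := by
  rw [List.take_add_one, hι, jrun_append]
  simp only [Option.toList_some, jrun_singleton]

/-- The automaton executing the program `P`; in state `q` it executes the instruction number `q`,
counting from `0`, and state `P.length` is accepting. -/
noncomputable def JFA.ofProgram (P : List (JInstr k A)) : JFA k A where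
  Q := Fin (P.length + 1)
  fin := inferInstance
  q0 := 0
  F := {Fin.last P.length}
  δ q := match P[(q : ℕ)]? with
    | some ι => ι.transition q (q + 1)
    | none => fun _ _ _ => (q, (.stay, .stay), fun _ => .keep)

/-- The store of the initial configuration. -/
def JStore.initial : JStore k := ⟨(0, 0), fun _ => 0⟩

theorem JStore.initial_valid (n : ℕ) : (JStore.initial : JStore k).Valid n :=
  ⟨⟨Nat.zero_le _, Nat.zero_le _⟩, fun _ => Nat.zero_le _⟩

theorem JFA.ofProgram_δ {q : Fin (P.length + 1)} {ι : JInstr k A} (hι : P[(q : ℕ)]? = some ι) :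
    (JFA.ofProgram P).δ q = ι.transition q (q + 1) := by
  simp [JFA.ofProgram, hι]

theorem JFA.ofProgram_δ_last :
    (JFA.ofProgram P).δ (Fin.last P.length) =
      fun _ _ _ => (Fin.last P.length, (.stay, .stay), fun _ => .keep) := by
  simp [JFA.ofProgram]

/-- A configuration in state `q` has come about by executing the instructions before `q`
completely and the instruction `q`, if there is one, in part. -/
def JFA.ProgramInvariant (P : List (JInstr k A)) (w : List A)
    (c : JConfig k (JFA.ofProgram P).Q) : Prop :=
  ∃ (q : Fin (P.length + 1)) (s₀ s : JStore k) (v : Fin k → ℕ), c = s.config q v ∧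
    JRun w (P.take q) .initial s₀ ∧ ∀ ι, P[(q : ℕ)]? = some ι → ι.InProgress w s₀ s v

theorem JFA.ProgramInvariant.step {c c' : JConfig k (JFA.ofProgram P).Q}
    (h : ProgramInvariant P w c) (hstep : JStep (ofProgram P) w c c') :
    ProgramInvariant P w c' := by
  obtain ⟨q, s₀, s, v, rfl, hrun, hprogress⟩ := h
  induction q using Fin.lastCases with
  | last =>
    have hc' := (jstep_keep_iff hstep.1 (congrFun₃ ofProgram_δ_last _ _ _)).1 hstep
    exact ⟨_, s₀, _, v, hc', hrun, by simp⟩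
  | cast q =>
    have hι : P[(q.castSucc : ℕ)]? = some P[q] := by simp
    have hvalid := hrun.valid (JStore.initial_valid _)
    obtain ⟨s', v', rfl, h⟩ | ⟨s', rfl, h⟩ :=
      (hprogress _ hι).step (ofProgram_δ hι) hvalid hstep
    · exact ⟨_, s₀, s', v', rfl, hrun, fun ι' hι' => Option.some.inj (hι.symm.trans hι') ▸ h⟩
    · refine ⟨_, s', s', 0, rfl, ?_, fun ι _ => ι.inProgress_refl w s'⟩
      rw [Fin.coeSucc_eq_succ, Fin.val_succ]
      exact (jrun_take_succ hι).2 ⟨s₀, hrun, h⟩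

theorem JFA.reachable_of_jrun_take (q : Fin (P.length + 1))
    (h : JRun w (P.take q) .initial s) :
    Relation.ReflTransGen (JStep (ofProgram P) w) (JStore.initial.config (ofProgram P).q0 0)
      (s.config q 0) := by
  induction q using Fin.induction generalizing s with
  | zero => cases h; rfl
  | succ q ih =>
    have hι : P[(q.castSucc : ℕ)]? = some P[q] := by simp
    obtain ⟨t, hrun, hexec⟩ := (jrun_take_succ hι).1 h
    have hstep := hexec.reachable (ofProgram_δ hι) (hrun.valid (JStore.initial_valid _))
    rw [Fin.coeSucc_eq_succ] at hstep
    exact (ih hrun).trans hstep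

theorem JFA.ofProgram_accepts_iff : (ofProgram P).Accepts w ↔ ∃ s, JRun w P .initial s := by
  constructor
  · rintro ⟨c, hreach, hc⟩
    have hinv : ProgramInvariant P w c := by
      refine Relation.ReflTransGen.rec ?_ (fun _ hstep h => h.step hstep) hreach
      exact ⟨0, .initial, .initial, 0, rfl, rfl, fun ι _ => ι.inProgress_refl w _⟩
    obtain ⟨q, s, s', v, rfl, hrun, -⟩ := hinv
    obtain rfl : q = Fin.last P.length := hc
    exact ⟨s, by simpa using hrun⟩
  · rintro ⟨s, hrun⟩
    exact ⟨_, reachable_of_jrun_take (Fin.last _) (by simpa using hrun),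
      Set.mem_singleton (Fin.last P.length)⟩

end Programs

section Tape

variable {k : ℕ} {A : Type} {w : List A} {s s' : JStore k}

theorem tapeSym_eq_rend_iff {h : ℕ} : tapeSym w h = .rend ↔ w.length < h := by
  unfold tapeSym
  split_ifs with hh
  · simp [hh]
  · cases hw : w[h - 1]? with
    | none => simpa using by have := List.getElem?_eq_none_iff.1 hw; omega
    | some a => simpa using by have := (List.getElem?_eq_some_iff.1 hw).1; omega

theorem tapeSym_succ_eq_iff {a b : ℕ} :
    tapeSym w (a + 1) = tapeSym w (b + 1) ↔ w[a]? = w[b]? := by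
  simp only [tapeSym, Nat.add_one_ne_zero, if_false, Nat.add_sub_cancel]
  cases w[a]? <;> cases w[b]? <;> simp

theorem append_prefix_iff_getElem? {b x c : List A} (h : b ++ x ++ c <+: w) :
    b ++ x ++ c ++ x <+: w ↔
      ∀ t < x.length, w[b.length + t]? = w[(b ++ x ++ c).length + t]? := by
  obtain ⟨d, rfl⟩ := h
  rw [List.prefix_append_right_inj, List.prefix_iff_getElem?]
  refine forall₂_congr fun t ht => ?_
  rw [List.getElem?_append_right (Nat.le_add_right _ _), Nat.add_sub_cancel_left,
    eq_comm, ← List.getElem?_eq_getElem ht]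
  simp [List.getElem?_append, ht]

/-- The guard `g` together with the condition that the right head is not on the right endmarker. -/
def inside (g : JSym A → JSym A → Prop) (a b : JSym A) : Prop := b ≠ .rend ∧ g a b

theorem exec_loop_inside_iff {i : Fin k} {g : JSym A → JSym A → Prop} (hs : s.Valid w.length) :
    (JInstr.loop i (inside g) (.right, .right)).Exec w s s' ↔
      s.heads.2 + s.bound i ≤ w.length + 1 ∧
      (∀ t < s.bound i, g (tapeSym w (s.heads.1 + t)) (tapeSym w (s.heads.2 + t))) ∧
      s' = { s with heads := (s.heads.1 + s.bound i, s.heads.2 + s.bound i) } := by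
  have hmove (t) (ht : s.heads.2 + t ≤ w.length + 1) :
      (JStore.move w.length (.right, .right))^[t] s =
        { s with heads := (s.heads.1 + t, s.heads.2 + t) } := by
    rw [JStore.iterate_move, iterate_moveHeads_eq (h' := (s.heads.1 + t, s.heads.2 + t)) hs.1
      ⟨Nat.add_le_add_right hs.1.1 t, ht⟩] <;> simp [HInstr.toInt]
  constructor
  · rintro ⟨hscan, rfl⟩
    have hfit (t) (ht : t ≤ s.bound i) : s.heads.2 + t ≤ w.length + 1 := by
      induction t with
      | zero => exact hs.1.2
      | succ t ih =>
        have hin := (hscan t ht).1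
        rw [hmove t (ih (by omega)), Ne, tapeSym_eq_rend_iff] at hin
        grind
    refine ⟨hfit _ le_rfl, fun t ht => ?_, hmove _ (hfit _ le_rfl)⟩
    simpa only [hmove t (hfit t ht.le)] using (hscan t ht).2
  · rintro ⟨hfit, hg, rfl⟩
    refine ⟨fun t ht => ?_, (hmove _ hfit).symm⟩
    rw [hmove t (by omega)]
    exact ⟨by rw [Ne, tapeSym_eq_rend_iff]; grind, hg t ht⟩

/-- Move the heads by `r` once for each unit of the bounds of the counters assigned to `γ`. -/
def sweep {V : Type*} (col : V → Fin k) (A : Type) (r : HInstr × HInstr) (γ : List V) :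
    List (JInstr k A) :=
  γ.map fun z => .loop (col z) (fun _ _ => True) r

theorem jrun_sweep_iff_iterate {V : Type*} {col : V → Fin k} {r : HInstr × HInstr} {γ : List V} :
    JRun w (sweep col A r γ) s s' ↔
      s' = (JStore.move w.length r)^[(γ.map fun z => s.bound (col z)).sum] s := by
  induction γ generalizing s with
  | nil => exact eq_comm
  | cons z γ ih =>
    have ih' (s) : JRun w (γ.map fun z => .loop (col z) (fun _ _ => True) r) s s' ↔ _ := ih (s := s)
    simp [sweep, JRun, JInstr.Exec, ih', JStore.bound_iterate_move, ← Function.iterate_add_apply,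
      add_comm]

theorem jrun_sweep_iff {V : Type*} {col : V → Fin k} {r : HInstr × HInstr} {γ : List V}
    {σ : V → List A} {h : ℕ × ℕ} (hs : s.Valid w.length)
    (hγ : ∀ z ∈ γ, s.bound (col z) = (σ z).length) (hh : HeadsValid w.length h)
    (h₁ : (h.1 : ℤ) = s.heads.1 + (γ.flatMap σ).length * r.1.toInt)
    (h₂ : (h.2 : ℤ) = s.heads.2 + (γ.flatMap σ).length * r.2.toInt) :
    JRun w (sweep col A r γ) s s' ↔ s' = { s with heads := h } := by
  have hsum : (γ.map fun z => s.bound (col z)).sum = (γ.flatMap σ).length := by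
    rw [List.length_flatMap, List.map_congr_left hγ]
  rw [jrun_sweep_iff_iterate, hsum, JStore.iterate_move, iterate_moveHeads_eq hs.1 hh h₁ h₂]

end Tape

section PatternProgram

variable {V : Type*} {k : ℕ}

/-- Guess the length of the image of `y`, store it in the counter of `y` and skip that image. -/
def guessBlock (A : Type) (i : Fin k) : List (JInstr k A) :=
  [.guess i, .loop i (inside fun _ _ => True) (.right, .right)]

/-- With both heads behind the image of `y :: γ`, move the left head back to its
beginning, compare the image of `y` there with the input ahead of the right head, and bring the
left head to the right head. -/
def matchBlock (A : Type) (col : V → Fin k) (y : V) (γ : List V) : List (JInstr k A) :=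
  sweep col A (.left, .stay) (y :: γ) ++ .loop (col y) (inside Eq) (.right, .right) ::
    sweep col A (.right, .stay) (γ ++ [y])

/-- The program reading the image of `y` when both heads are behind the image of `π`. -/
def variableBlock [DecidableEq V] (A : Type) (col : V → Fin k) (π : List V) (y : V) :
    List (JInstr k A) :=
  if y ∈ π then matchBlock A col y (π.rtakeWhile (· ≠ y)) else guessBlock A (col y)

/-- The program reading the image of `ρ` when both heads are behind the image of `π`. -/
def patternProgram [DecidableEq V] (A : Type) (col : V → Fin k) :
    List V → List V → List (JInstr k A)
  | _, [] => []
  | π, y :: ρ => variableBlock A col π y ++ patternProgram A col (π ++ [y]) ρ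

end PatternProgram

section Blocks

variable {V : Type*} {A : Type} {k : ℕ} {w : List A} {s s' : JStore k}

theorem jrun_guessBlock_iff {i : Fin k} {p : ℕ} (hs : s.Valid w.length)
    (hp : s.heads = (p + 1, p + 1)) :
    JRun w (guessBlock A i) s s' ↔ ∃ b, p + b ≤ w.length ∧
      s' = (s.setBound i b).placeHeads (p + b + 1) := by
  constructor
  · rintro ⟨_, ⟨b, hb, rfl⟩, _, h, rfl⟩
    obtain ⟨hfit, -, rfl⟩ := (exec_loop_inside_iff (hs.setBound i hb)).1 h
    simp only [JStore.setBound, Function.update_self, hp] at hfit ⊢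
    exact ⟨b, by omega, by simp only [JStore.placeHeads, add_right_comm]⟩
  · rintro ⟨b, hb, rfl⟩
    refine ⟨_, ⟨b, by omega, rfl⟩, _, (exec_loop_inside_iff (hs.setBound i (by omega))).2
      ⟨?_, by simp, rfl⟩, ?_⟩
    · simp [JStore.setBound, hp]; omega
    · simp [JStore.setBound, JStore.placeHeads, hp, add_right_comm, JRun]

theorem jrun_matchBlock_iff {col : V → Fin k} {σ : V → List A} {γ : List V} {y : V} {l p : ℕ}
    (hs : s.Valid w.length) (hγ : ∀ z ∈ y :: γ, s.bound (col z) = (σ z).length)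
    (hp : p = l + ((y :: γ).flatMap σ).length) (hheads : s.heads = (p, p)) :
    JRun w (matchBlock A col y γ) s s' ↔ p + (σ y).length ≤ w.length + 1 ∧
      (∀ t < (σ y).length, tapeSym w (l + t) = tapeSym w (p + t)) ∧
      s' = s.placeHeads (p + (σ y).length) := by
  obtain ⟨h, b⟩ := s
  obtain rfl : h = (p, p) := hheads
  dsimp only at hγ ⊢
  have hvalid : HeadsValid w.length (l, p) := ⟨hp ▸ Nat.le_add_right _ _, hs.1.2⟩
  have hback (u) := jrun_sweep_iff (r := (.left, .stay)) (s' := u) hs hγ hvalid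
    (by simp [HInstr.toInt, hp]; ring) (by simp [HInstr.toInt])
  have hmatch (u) := exec_loop_inside_iff (i := col y) (g := Eq) (s := ⟨(l, p), b⟩) (s' := u)
    ⟨hvalid, hs.2⟩
  have hforth (hfit : p + (σ y).length ≤ w.length + 1) (u) :=
    jrun_sweep_iff (r := (.right, .stay)) (γ := γ ++ [y]) (σ := σ)
      (s := ⟨(l + (σ y).length, p + (σ y).length), b⟩) (s' := u)
      (h := (p + (σ y).length, p + (σ y).length)) ⟨⟨Nat.add_le_add_right hvalid.1 _, hfit⟩, hs.2⟩
      (fun z hz => hγ z (by simpa [or_comm] using hz)) ⟨le_rfl, hfit⟩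
      (by simp [HInstr.toInt, hp]; ring) (by simp [HInstr.toInt])
  simp only [hγ y List.mem_cons_self] at hmatch
  simp only [matchBlock, jrun_append, JRun, hback, exists_eq_left, hmatch]
  constructor
  · rintro ⟨_, ⟨hfit, heq, rfl⟩, hrun⟩
    exact ⟨hfit, heq, (hforth hfit _).1 hrun⟩
  · rintro ⟨hfit, heq, rfl⟩
    exact ⟨_, ⟨hfit, heq, rfl⟩, (hforth hfit _).2 rfl⟩

end Blocks

section PatternProgramCorrectness

variable {V : Type*} {A : Type} {k : ℕ} {w : List A} {col : V → Fin k} {π ρ : List V} {y : V}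
  {σ : V → List A} {s s' : JStore k}

/-- The store in which the pattern program with the counter assignment `col` has processed the part
`π` of the pattern `π ++ ρ` by reading its image under `σ`. -/
structure Encodes (w : List A) (col : V → Fin k) (π ρ : List V) (σ : V → List A)
    (s : JStore k) : Prop where
  heads : s.heads = ((π.flatMap σ).length + 1, (π.flatMap σ).length + 1)
  isPrefix : π.flatMap σ <+: w
  bound_le : ∀ i, s.bound i ≤ w.length
  bound_eq : ∀ z ∈ liveVars π ρ, s.bound (col z) = (σ z).length

theorem Encodes.valid (h : Encodes w col π ρ σ s) : s.Valid w.length := by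
  refine ⟨?_, h.bound_le⟩
  rw [h.heads]
  exact ⟨le_rfl, Nat.succ_le_succ h.isPrefix.length_le⟩

theorem Encodes.jrun_matchBlock_iff [DecidableEq V] (h : Encodes w col π (y :: ρ) σ s)
    (hy : y ∈ π) :
    JRun w (matchBlock A col y (π.rtakeWhile (· ≠ y))) s s' ↔
      π.flatMap σ ++ σ y <+: w ∧
        s' = s.placeHeads ((π.flatMap σ).length + 1 + (σ y).length) := by
  obtain ⟨β, hβ⟩ := exists_eq_append_cons_of_mem_last hy
  set γ := π.rtakeWhile (· ≠ y)
  have hyγ : y ∉ γ := fun hmem => by simpa using List.mem_rtakeWhile_imp hmem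
  have hπ : π.flatMap σ = β.flatMap σ ++ σ y ++ γ.flatMap σ := by rw [hβ]; simp
  have hlive (z) (hz : z ∈ y :: γ) : z ∈ liveVars π (y :: ρ) :=
    ⟨y, γ, ⟨β, hβ.symm⟩, hyγ, List.mem_cons_self, hz⟩
  have hmatch_iff := append_prefix_iff_getElem? (hπ ▸ h.isPrefix)
  rw [_root_.jrun_matchBlock_iff (l := (β.flatMap σ).length + 1) h.valid
    (fun z hz => h.bound_eq z (hlive z hz)) (by simp [hπ]; omega) h.heads]
  simp only [add_right_comm _ 1, tapeSym_succ_eq_iff, hπ, hmatch_iff, ← and_assoc]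
  refine and_congr_left' (and_iff_right_of_imp fun heq => ?_)
  have hlen := (hmatch_iff.2 heq).length_le
  rw [List.length_append] at hlen
  omega

theorem Encodes.jrun_guessBlock_iff (h : Encodes w col π ρ σ s) :
    JRun w (guessBlock A (col y)) s s' ↔ ∃ u, π.flatMap σ ++ u <+: w ∧
      s' = (s.setBound (col y) u.length).placeHeads ((π.flatMap σ).length + 1 + u.length) := by
  rw [_root_.jrun_guessBlock_iff h.valid h.heads]
  constructor
  · rintro ⟨b, hb, rfl⟩
    obtain ⟨d, rfl⟩ := h.isPrefix
    have hlen : (d.take b).length = b := by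
      rw [List.length_append] at hb
      rw [List.length_take]
      omega
    refine ⟨d.take b, (List.prefix_append_right_inj _).2 (List.take_prefix _ _), ?_⟩
    rw [hlen, add_right_comm]
  · rintro ⟨u, hu, rfl⟩
    exact ⟨u.length, by simpa using hu.length_le, by rw [add_right_comm]⟩

theorem Encodes.placeHeads_of_mem (h : Encodes w col π (y :: ρ) σ s) (hy : y ∈ π)
    (hpre : π.flatMap σ ++ σ y <+: w) :
    Encodes w col (π ++ [y]) ρ σ
      (s.placeHeads ((π.flatMap σ).length + 1 + (σ y).length)) where
  heads := by simp [JStore.placeHeads, add_right_comm]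
  isPrefix := by simpa using hpre
  bound_le := h.bound_le
  bound_eq z hz := h.bound_eq z (liveVars_concat_subset ρ hy hz)

theorem Encodes.setBound_of_notMem [DecidableEq V] (h : Encodes w col π (y :: ρ) σ s) (hy : y ∉ π)
    (hcol : Set.InjOn col (liveVars (π ++ [y]) ρ)) {u : List A} (hpre : π.flatMap σ ++ u <+: w) :
    Encodes w col (π ++ [y]) ρ (Function.update σ y u)
      ((s.setBound (col y) u.length).placeHeads ((π.flatMap σ).length + 1 + u.length)) := by
  have hne (z) (hz : z ∈ π) : Function.update σ y u z = σ z :=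
    Function.update_of_ne (ne_of_mem_of_not_mem hz hy) u σ
  have himage : (π ++ [y]).flatMap (Function.update σ y u) = π.flatMap σ ++ u := by
    simp [List.flatMap_def, List.map_congr_left hne]
  refine ⟨by simp [himage, JStore.placeHeads, add_right_comm], himage ▸ hpre, ?_, ?_⟩
  · refine (h.valid.setBound (col y) ?_).2
    have := hpre.length_le
    grind
  · intro z hz
    rcases eq_or_ne z y with rfl | hzy
    · simp [JStore.placeHeads, JStore.setBound]
    · have hcz : col z ≠ col y := fun heq => hzy (hcol hz (concat_mem_liveVars hz) heq)
      have hzπ : z ∈ liveVars π (y :: ρ) :=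
        (liveVars_concat_subset_insert π ρ y hz).resolve_left hzy
      simpa [JStore.placeHeads, JStore.setBound, hcz, hzy] using h.bound_eq z hzπ

theorem Encodes.variableBlock_sound [DecidableEq V] (h : Encodes w col π (y :: ρ) σ s)
    (hcol : Set.InjOn col (liveVars (π ++ [y]) ρ)) (hrun : JRun w (variableBlock A col π y) s s') :
    ∃ τ, Encodes w col (π ++ [y]) ρ τ s' := by
  unfold variableBlock at hrun
  split_ifs at hrun with hy
  · obtain ⟨hpre, rfl⟩ := (h.jrun_matchBlock_iff hy).1 hrun
    exact ⟨σ, h.placeHeads_of_mem hy hpre⟩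
  · obtain ⟨u, hpre, rfl⟩ := h.jrun_guessBlock_iff.1 hrun
    exact ⟨_, h.setBound_of_notMem hy hcol hpre⟩

theorem Encodes.variableBlock_complete [DecidableEq V] (h : Encodes w col π (y :: ρ) σ s)
    (hcol : Set.InjOn col (liveVars (π ++ [y]) ρ)) (hpre : (π ++ [y]).flatMap σ <+: w) :
    ∃ s', JRun w (variableBlock A col π y) s s' ∧ Encodes w col (π ++ [y]) ρ σ s' := by
  replace hpre : π.flatMap σ ++ σ y <+: w := by simpa using hpre
  unfold variableBlock
  split_ifs with hy
  · exact ⟨_, (h.jrun_matchBlock_iff hy).2 ⟨hpre, rfl⟩, h.placeHeads_of_mem hy hpre⟩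
  · refine ⟨_, h.jrun_guessBlock_iff.2 ⟨σ y, hpre, rfl⟩, ?_⟩
    simpa using h.setBound_of_notMem hy hcol hpre

theorem Encodes.patternProgram_sound [DecidableEq V] (h : Encodes w col π ρ σ s)
    (hcol : ∀ π' ρ', π' ++ ρ' = π ++ ρ → Set.InjOn col (liveVars π' ρ'))
    (hrun : JRun w (patternProgram A col π ρ) s s') : ∃ τ, Encodes w col (π ++ ρ) [] τ s' := by
  induction ρ generalizing π σ s with
  | nil => cases hrun; exact ⟨σ, by simpa using h⟩
  | cons y ρ ih =>
    obtain ⟨t, hblock, hrest⟩ := jrun_append.1 hrun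
    obtain ⟨τ, hτ⟩ := h.variableBlock_sound (hcol _ _ (by simp)) hblock
    simpa using ih hτ (by simpa using hcol) hrest

theorem Encodes.patternProgram_complete [DecidableEq V] (h : Encodes w col π ρ σ s)
    (hcol : ∀ π' ρ', π' ++ ρ' = π ++ ρ → Set.InjOn col (liveVars π' ρ'))
    (hpre : (π ++ ρ).flatMap σ <+: w) :
    ∃ s', JRun w (patternProgram A col π ρ) s s' ∧ Encodes w col (π ++ ρ) [] σ s' := by
  induction ρ generalizing π s with
  | nil => exact ⟨s, rfl, by simpa using h⟩
  | cons y ρ ih =>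
    rw [List.append_cons] at hcol hpre ⊢
    obtain ⟨t, hblock, ht⟩ := h.variableBlock_complete (hcol _ _ rfl)
      ((List.prefix_append _ _).trans (by simpa using hpre))
    obtain ⟨s', hrest, hs'⟩ := ih ht hcol hpre
    exact ⟨s', jrun_append.2 ⟨t, hblock, hrest⟩, hs'⟩

/-- The program accepting the pattern language of `α`: move both heads to the first input symbol,
read the image of `α` and check that the right head is on the right endmarker. -/
def acceptingProgram [DecidableEq V] (A : Type) (col : V → Fin k) (α : List V) :
    List (JInstr k A) :=
  .once (fun _ _ => True) (.right, .right) :: patternProgram A col [] α ++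
    [.once (fun _ b => b = .rend) (.stay, .stay)]

theorem encodes_start (w : List A) (col : V → Fin k) (α : List V) (σ : V → List A) :
    Encodes w col [] α σ (JStore.initial.move w.length (.right, .right)) where
  heads := by simp [JStore.move, JStore.initial, moveHeads, HInstr.toInt]
  isPrefix := List.nil_prefix
  bound_le _ := Nat.zero_le _
  bound_eq z hz := by simpa using mem_of_mem_liveVars hz

theorem Encodes.scans_rend_iff (h : Encodes w col π ρ σ s) :
    Scans w (fun _ b => b = .rend) s ↔ π.flatMap σ = w := by
  rw [Scans, tapeSym_eq_rend_iff, h.heads, Nat.lt_succ_iff]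
  exact ⟨fun hle => h.isPrefix.eq_of_length_le hle, fun heq => heq ▸ le_rfl⟩

theorem exists_jrun_acceptingProgram_iff [DecidableEq V] {α : List V}
    (hcol : ∀ π ρ, π ++ ρ = α → Set.InjOn col (liveVars π ρ)) :
    (∃ s, JRun w (acceptingProgram A col α) .initial s) ↔ ∃ σ : V → List A, α.flatMap σ = w := by
  constructor
  · rintro ⟨s, _, ⟨-, rfl⟩, hrun⟩
    obtain ⟨t, hread, hlast⟩ := jrun_append.1 hrun
    obtain ⟨σ, hσ⟩ := (encodes_start w col α fun _ => []).patternProgram_sound hcol hread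
    exact ⟨σ, hσ.scans_rend_iff.1 (jrun_singleton.1 hlast).1⟩
  · rintro ⟨σ, hσ⟩
    obtain ⟨t, hread, ht⟩ :=
      (encodes_start w col α σ).patternProgram_complete hcol (hσ ▸ List.prefix_rfl)
    exact ⟨_, _, ⟨trivial, rfl⟩, jrun_append.2
      ⟨t, hread, jrun_singleton.2 ⟨ht.scans_rend_iff.2 hσ, rfl⟩⟩⟩

end PatternProgramCorrectness

theorem statement13_general {A : Type} (α : List ℕ) :
    ∃ M : JFA (vd α + 1) A, M.Lang = PatternLang A α := by
  obtain ⟨col, hcol⟩ := exists_injOn_liveVars (α := α) (k := vd α)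
    fun π ρ h => h ▸ ncard_liveVars_le π ρ
  refine ⟨.ofProgram (acceptingProgram A col α), Set.ext fun w => ?_⟩
  calc (JFA.ofProgram (acceptingProgram A col α)).Accepts w
      ↔ ∃ s, JRun w (acceptingProgram A col α) .initial s := JFA.ofProgram_accepts_iff
    _ ↔ ∃ σ : ℕ → List A, α.flatMap σ = w := exists_jrun_acceptingProgram_iff hcol
    _ ↔ w ∈ PatternLang A α := by
      simp [PatternLang, List.flatMap_def, eq_comm]

/-- Theorem 3 of the paper. Let `α` be a terminal-free
pattern. Then there exists a Janus automaton `M` with `vd(α) + 1` counters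
such that `L(M) = L(α)`. -/
theorem statement13 {A : Type} [Fintype A] [Nonempty A]
    (α : List ℕ) (hα : α ≠ []) :
    ∃ M : JFA (vd α + 1) A, M.Lang = PatternLang A α :=
  statement13_general α
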